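/- Let k be a real number with k + 1 ≠ 0. Let ω, S, S̄, T ∈ M with d ω = 0 and i S = 0, define ᾱ := i ω − d S and ω̄ := d ᾱ, and assume d S̄ = i ω̄ and j ω = − 2 • d T. Suppose the element g := L S − 2 • S̄ + i ᾱ − 2 • T satisfies e g = 0 and (d ∘ e + e ∘ d)(g) = (k+1) • g (i.e. g is a function of ghost number k + 1). Then L S = 2 • S̄ − i ᾱ + 2 • T. (Paper: Proposition L_Q S = 2 S̄ − ι_Q ᾱ + 2 T for k ≠ −1, the equivariant modified classical master equation.) -/

import Mathlib

/-!
Write `g` for the difference of the two sides of the equation. Since `L ω = -d (i ω)` for closed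
`ω`, applying `⁅L, i⁆` to `ω` gives `2 i d i ω - d i i ω`; comparing with `d S̄ = i ω̄` and
`⁅L, i⁆ ω = -2 d T` shows that `g` is closed. A closed element killed by the Euler contraction `e`
has `L_E g = d (e g) + e (d g) = 0`, so it vanishes when its weight does not.
-/

theorem eq_zero_of_anticommutator_apply_eq_smul {R M : Type*} [Semiring R] [AddCommMonoid M]
    [Module R M] {d e : Module.End R M} {c : R} (hc : IsSMulRegular M c) {x : M}
    (hdx : d x = 0) (hex : e x = 0) (hx : (d ∘ₗ e + e ∘ₗ d) x = c • x) : x = 0 := by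
  refine hc.right_eq_zero_of_smul (hx.symm.trans ?_)
  rw [LinearMap.add_apply, LinearMap.comp_apply, LinearMap.comp_apply, hdx, hex, map_zero,
    map_zero, add_zero]

section

variable {R M : Type*} [Semiring R] [AddCommGroup M] [Module R M]

theorem lie_lie_apply_of_map_eq_zero {d i : Module.End R M} {ω : M} (hω : d ω = 0) :
    ⁅⁅i, d⁆, i⁆ ω = 2 • i (d (i ω)) - d (i (i ω)) := by
  simp only [Ring.lie_def, LinearMap.sub_apply, Module.End.mul_apply, hω, map_zero, map_sub]
  abel

/-- The difference of the two sides of the equivariant modified classical master equation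
`L S = 2 S̄ - i α + 2 T`. Here `d` is the de Rham differential, `i` the contraction with the BV
vector field, `Sb` stands for `S̄`, the Lie derivative `L = i d - d i` is encoded as the ring
commutator `⁅i, d⁆`, and `α = i ω - d S` is written out. -/
def masterDefect (d i : Module.End R M) (ω S Sb T : M) : M :=
  ⁅i, d⁆ S - 2 • Sb + i (i ω - d S) - 2 • T

theorem masterDefect_eq (d i : Module.End R M) (ω S Sb T : M) :
    masterDefect d i ω S Sb T = i (i ω) - d (i S) - 2 • Sb - 2 • T := by
  simp only [masterDefect, Ring.lie_def, LinearMap.sub_apply, Module.End.mul_apply, map_sub]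
  abel

theorem map_masterDefect_eq_zero {d i : Module.End R M} (hdd : d ∘ₗ d = 0) {ω S Sb T : M}
    (hω : d ω = 0) (hSb : d Sb = i (d (i ω - d S))) (hT : ⁅⁅i, d⁆, i⁆ ω = -(2 • d T)) :
    d (masterDefect d i ω S Sb T) = 0 := by
  have hd (x : M) : d (d x) = 0 := LinearMap.congr_fun hdd x
  have hSb' : d Sb = i (d (i ω)) := by rw [hSb, map_sub, hd, sub_zero]
  calc d (masterDefect d i ω S Sb T)
      = d (i (i ω)) - 2 • i (d (i ω)) - 2 • d T := by
        simp only [masterDefect_eq, map_sub, map_nsmul, hd, hSb', sub_zero]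
    _ = -⁅⁅i, d⁆, i⁆ ω - 2 • d T := by rw [lie_lie_apply_of_map_eq_zero hω, neg_sub]
    _ = 0 := by rw [hT, neg_neg, sub_self]

theorem equivariant_mCME_general {d i e : Module.End R M} (hdd : d ∘ₗ d = 0) {c : R}
    (hc : IsSMulRegular M c) {ω S Sb T : M} (hω : d ω = 0)
    (hSb : d Sb = i (d (i ω - d S))) (hT : ⁅⁅i, d⁆, i⁆ ω = -(2 • d T))
    (hfun : e (masterDefect d i ω S Sb T) = 0)
    (hgh : (d ∘ₗ e + e ∘ₗ d) (masterDefect d i ω S Sb T) = c • masterDefect d i ω S Sb T) :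
    ⁅i, d⁆ S = 2 • Sb - i (i ω - d S) + 2 • T := by
  have hzero : masterDefect d i ω S Sb T = 0 :=
    eq_zero_of_anticommutator_apply_eq_smul hc (map_masterDefect_eq_zero hdd hω hSb hT) hfun hgh
  rw [← sub_eq_zero, ← hzero, masterDefect]
  abel

end

/-- Proposition `L_Q S = 2 S̄ - ι_Q ᾱ + 2 T` for `k ≠ -1`: the equivariant
modified classical master equation.  Here `d` models `δ`, `i` models `ι_Q`,
`L := i ∘ d - d ∘ i` models `L_Q`, `j := L ∘ i - i ∘ L` models `ι_{[Q,Q]}`,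
and `e` models the contraction with the Euler vector field. -/
theorem equivariant_mCME
    {M : Type*} [AddCommGroup M] [Module ℝ M]
    (d i e : M →ₗ[ℝ] M)
    (hdd : d ∘ₗ d = 0)
    (k : ℝ) (hk : k + 1 ≠ 0)
    (ω S Sb T : M)
    (hω : d ω = 0)
    (hiS : i S = 0)
    (L : M →ₗ[ℝ] M) (hL : L = i ∘ₗ d - d ∘ₗ i)
    (j : M →ₗ[ℝ] M) (hj : j = L ∘ₗ i - i ∘ₗ L)
    (α ωb : M) (hα : α = i ω - d S) (hωb : ωb = d α)
    (hSb : d Sb = i ωb)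
    (hT : j ω = - (2 : ℝ) • d T)
    (g : M) (hg : g = L S - 2 • Sb + i α - 2 • T)
    (hfun : e g = 0)
    (hgh : (d ∘ₗ e + e ∘ₗ d) g = (k + 1) • g) :
    L S = 2 • Sb - i α + 2 • T := by
  subst hL hj hα hωb hg
  rw [neg_smul, ofNat_smul_eq_nsmul] at hT
  have hreg : IsSMulRegular M (k + 1) := (IsUnit.mk0 _ hk).isSMulRegular M
  exact equivariant_mCME_general hdd hreg hω hSb hT hfun hgh
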